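/- For any two n-outcome POVMs E₁ and E₂ on ℂ^d (d ≥ 1), one has B(E₁,E₂) = 1 if and only if E₁ = E₂ (i.e., E₁(i) = E₂(i) for every outcome i). -/

import Mathlib

open scoped BigOperators Kronecker ComplexOrder Matrix

noncomputable section

/-- The positive semidefinite square root of a positive semidefinite matrix
(the definition of the older Mathlib, since removed). -/
noncomputable def Matrix.PosSemidef.sqrt {n 𝕜 : Type*} [Fintype n] [RCLike 𝕜] [DecidableEq n]
    {A : Matrix n n 𝕜} (hA : A.PosSemidef) : Matrix n n 𝕜 :=
  hA.1.eigenvectorUnitary.1 * Matrix.diagonal ((↑) ∘ Real.sqrt ∘ hA.1.eigenvalues) *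
    (star hA.1.eigenvectorUnitary : Matrix n n 𝕜)

namespace QProg

/-- The positive-semidefinite square root of a matrix, extended by `0` to all matrices. -/
noncomputable def matSqrt {α : Type*} [Fintype α] [DecidableEq α]
    (A : Matrix α α ℂ) : Matrix α α ℂ :=
  @dite _ A.PosSemidef (Classical.propDecidable _) (fun h => h.sqrt) (fun _ => 0)

/-- The fidelity `F(ρ,σ) = Tr √(√ρ σ √ρ)` of two (density) matrices. -/
noncomputable def fid {α : Type*} [Fintype α] [DecidableEq α]
    (ρ σ : Matrix α α ℂ) : ℝ :=
  ((matSqrt (matSqrt ρ * σ * matSqrt ρ)).trace).re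

/-- A density matrix: positive semidefinite with unit trace. -/
def IsDensity {α : Type*} [Fintype α] [DecidableEq α] (ρ : Matrix α α ℂ) : Prop :=
  ρ.PosSemidef ∧ ρ.trace = 1

/-- An `n`-outcome POVM: positive semidefinite effects summing to the identity. -/
def IsPOVM {α : Type*} [Fintype α] [DecidableEq α] {n : ℕ}
    (E : Fin n → Matrix α α ℂ) : Prop :=
  (∀ i, (E i).PosSemidef) ∧ ∑ i, E i = 1

/-- The outcome distribution `p^E_ρ(i) = Tr[E(i) ρ]`. -/
noncomputable def outDist {α : Type*} [Fintype α] [DecidableEq α] {n : ℕ}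
    (E : Fin n → Matrix α α ℂ) (ρ : Matrix α α ℂ) (i : Fin n) : ℝ :=
  ((E i * ρ).trace).re

/-- The Bhattacharyya coefficient `B(p,q) = ∑ᵢ √(p i) √(q i)`. -/
noncomputable def bhat {n : ℕ} (p q : Fin n → ℝ) : ℝ :=
  ∑ i, Real.sqrt (p i) * Real.sqrt (q i)

/-- `B(E₁,E₂)`: infimum of `B(p^{E₁}_{ρ₁}, p^{E₂}_{ρ₂}) / F(ρ₁,ρ₂)` over pairs of
density matrices with nonvanishing fidelity. -/
noncomputable def obsB {α : Type*} [Fintype α] [DecidableEq α] {n : ℕ}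
    (E₁ E₂ : Fin n → Matrix α α ℂ) : ℝ :=
  sInf { r : ℝ | ∃ ρ₁ ρ₂ : Matrix α α ℂ, IsDensity ρ₁ ∧ IsDensity ρ₂ ∧
    fid ρ₁ ρ₂ ≠ 0 ∧ r = bhat (outDist E₁ ρ₁) (outDist E₂ ρ₂) / fid ρ₁ ρ₂ }

/-- A post-processing from `n` outcomes to `m` outcomes. -/
def IsPostProc {n m : ℕ} (lam : Fin n → Fin m → ℝ) : Prop :=
  (∀ i y, 0 ≤ lam i y) ∧ ∀ i, ∑ y, lam i y = 1

/-- The action `(λ⋆E)(y) = ∑ᵢ λ(i|y) E(i)` of a post-processing on a POVM. -/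
noncomputable def ppStar {α : Type*} [Fintype α] [DecidableEq α] {n m : ℕ}
    (lam : Fin n → Fin m → ℝ) (E : Fin n → Matrix α α ℂ) (y : Fin m) :
    Matrix α α ℂ :=
  ∑ i, (lam i y : ℂ) • E i

/-- The action `(λ⋆p)(y) = ∑ᵢ λ(i|y) p(i)` of a post-processing on a probability vector. -/
noncomputable def ppStarVec {n m : ℕ} (lam : Fin n → Fin m → ℝ) (p : Fin n → ℝ)
    (y : Fin m) : ℝ :=
  ∑ i, lam i y * p i

/-- A probability vector on `{1,…,n}`. -/
def IsProbVec {n : ℕ} (p : Fin n → ℝ) : Prop :=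
  (∀ i, 0 ≤ p i) ∧ ∑ i, p i = 1

/-- `F(λ₁,λ₂)`: infimum of `B(λ₁⋆p, λ₂⋆p)` over probability vectors `p`. -/
noncomputable def ppF {n m : ℕ} (lam₁ lam₂ : Fin n → Fin m → ℝ) : ℝ :=
  sInf { r : ℝ | ∃ p : Fin n → ℝ, IsProbVec p ∧
    r = bhat (ppStarVec lam₁ p) (ppStarVec lam₂ p) }

/-!
The fidelity is `Re Tr (U √σ √ρ)` for a suitable unitary `U`. Inserting `∑ᵢ E(i) = 1` between
`√σ` and `√ρ` and applying the Cauchy–Schwarz inequality to each `Re Tr (U √σ E(i) √ρ)` bounds it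
by the Bhattacharyya coefficient of the two outcome distributions, so no ratio in the infimum
`B(E, E)` is below `1`; the ratio `1` is attained at `ρ₁ = ρ₂`. Conversely, if `B(E₁, E₂) = 1`,
then at `ρ₁ = ρ₂ = ρ`, where the fidelity is `1`, the two outcome distributions have Bhattacharyya
coefficient at least `1`, which forces them to agree. As this holds for every state `ρ`, in
particular for the pure states of the eigenvectors of `E₁(i) - E₂(i)`, all eigenvalues of this
difference vanish.
-/

section Matrix

variable {𝕜 m n : Type*} [RCLike 𝕜]

lemma exists_linearIsometryEquiv_apply_eq_of_norm_eq {E V : Type*} [AddCommGroup E] [Module 𝕜 E]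
    [NormedAddCommGroup V] [InnerProductSpace 𝕜 V] [FiniteDimensional 𝕜 V] {f g : E →ₗ[𝕜] V}
    (h : ∀ x, ‖f x‖ = ‖g x‖) : ∃ u : V ≃ₗᵢ[𝕜] V, ∀ x, u (f x) = g x := by
  obtain ⟨s, hs⟩ := f.rangeRestrict.exists_rightInverse_of_surjective f.range_rangeRestrict
  have hfs (y : LinearMap.range f) : f (s y) = y := congr(($hs y : V))
  have hgs (x : E) : g (s (f.rangeRestrict x)) = g x := by
    rw [← sub_eq_zero, ← map_sub, ← norm_eq_zero, ← h, map_sub, hfs, norm_eq_zero, sub_eq_zero]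
    rfl
  let u₀ : LinearMap.range f →ₗᵢ[𝕜] V := ⟨g ∘ₗ s, fun y ↦ by simp [← h, hfs]⟩
  exact ⟨u₀.extend.toLinearIsometryEquiv rfl, fun x ↦
    (u₀.extend_apply (f.rangeRestrict x)).trans (hgs x)⟩

lemma exists_unitary_mul_eq_of_conjTranspose_mul_self_eq [Fintype m] [DecidableEq m] [Finite n]
    {A B : Matrix m n 𝕜} (h : Aᴴ * A = Bᴴ * B) :
    ∃ U ∈ Matrix.unitaryGroup m 𝕜, U * A = B := by
  classical
  have := Fintype.ofFinite n
  have hinner (M : Matrix m n 𝕜) (x : EuclideanSpace 𝕜 n) :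
      inner 𝕜 (M.toEuclideanLin x) (M.toEuclideanLin x) =
        inner 𝕜 x ((Mᴴ * M).toEuclideanLin x) := by
    rw [Matrix.toLpLin_mul_same, Matrix.toEuclideanLin_conjTranspose_eq_adjoint,
      LinearMap.comp_apply, LinearMap.adjoint_inner_right]
  obtain ⟨u, hu⟩ := exists_linearIsometryEquiv_apply_eq_of_norm_eq
    (f := A.toEuclideanLin) (g := B.toEuclideanLin) fun x ↦ by
      rw [norm_eq_sqrt_re_inner (𝕜 := 𝕜), norm_eq_sqrt_re_inner (𝕜 := 𝕜), hinner, hinner, h]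
  let U := (Matrix.toEuclideanCLM (n := m) (𝕜 := 𝕜)).symm (Unitary.linearIsometryEquiv.symm u)
  have hU : U.toEuclideanLin = u.toLinearMap := by
    rw [← Matrix.coe_toEuclideanCLM_eq_toEuclideanLin, StarAlgEquiv.apply_symm_apply]
    rfl
  refine ⟨U, Unitary.map_mem _ (Subtype.prop _), Matrix.toEuclideanLin.injective ?_⟩
  ext1 x
  rw [Matrix.toLpLin_mul_same, LinearMap.comp_apply, hU]
  exact hu x

lemma re_trace_mul_mul_conjTranspose_le [Fintype n] {E : Matrix n n 𝕜}
    (hE : E.PosSemidef) (A B : Matrix n n 𝕜) :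
    RCLike.re (A * E * Bᴴ).trace ≤
      √(RCLike.re (A * E * Aᴴ).trace) * √(RCLike.re (B * E * Bᴴ).trace) := by
  let := E.toMatrixSeminormedAddCommGroup hE
  let := E.toMatrixInnerProductSpace hE
  calc RCLike.re (A * E * Bᴴ).trace ≤ ‖B‖ * ‖A‖ := re_inner_le_norm (𝕜 := 𝕜) B A
    _ = ‖A‖ * ‖B‖ := mul_comm _ _

end Matrix

section SquareRoot

open scoped MatrixOrder

variable {α : Type*} [Fintype α] [DecidableEq α]

lemma matSqrt_eq_cfcSqrt (A : Matrix α α ℂ) : matSqrt A = CFC.sqrt A := by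
  by_cases hA : A.PosSemidef
  · rw [matSqrt, dif_pos hA, CFC.sqrt_eq_real_sqrt A hA.nonneg, cfcₙ_eq_cfc, hA.1.cfc_eq]
    rfl
  · rw [matSqrt, dif_neg hA, CFC.sqrt, cfcₙ_apply_of_not_predicate]
    rwa [Matrix.nonneg_iff_posSemidef]

lemma posSemidef_matSqrt (A : Matrix α α ℂ) : (matSqrt A).PosSemidef := by
  rw [matSqrt_eq_cfcSqrt]
  exact Matrix.nonneg_iff_posSemidef.1 (CFC.sqrt_nonneg A)

lemma conjTranspose_matSqrt (A : Matrix α α ℂ) : (matSqrt A)ᴴ = matSqrt A :=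
  (posSemidef_matSqrt A).isHermitian

lemma matSqrt_mul_matSqrt {A : Matrix α α ℂ} (hA : A.PosSemidef) :
    matSqrt A * matSqrt A = A := by
  rw [matSqrt_eq_cfcSqrt, CFC.sqrt_mul_sqrt_self A hA.nonneg]

lemma conjTranspose_matSqrt_mul_matSqrt {A : Matrix α α ℂ} (hA : A.PosSemidef) :
    (matSqrt A)ᴴ * matSqrt A = A := by
  rw [conjTranspose_matSqrt, matSqrt_mul_matSqrt hA]

lemma matSqrt_mul_self {A : Matrix α α ℂ} (hA : A.PosSemidef) : matSqrt (A * A) = A := by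
  rw [matSqrt_eq_cfcSqrt, CFC.sqrt_mul_self A hA.nonneg]

end SquareRoot

section Bhattacharyya

variable {n : ℕ} {p q : Fin n → ℝ}

lemma bhat_nonneg (p q : Fin n → ℝ) : 0 ≤ bhat p q :=
  Finset.sum_nonneg fun _ _ ↦ by positivity

lemma bhat_self (hp : ∀ i, 0 ≤ p i) : bhat p p = ∑ i, p i :=
  Finset.sum_congr rfl fun i _ ↦ Real.mul_self_sqrt (hp i)

lemma sum_sq_sqrt_sub_sqrt (hp : ∀ i, 0 ≤ p i) (hq : ∀ i, 0 ≤ q i) :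
    ∑ i, (√(p i) - √(q i)) ^ 2 = ∑ i, p i + ∑ i, q i - 2 * bhat p q := by
  rw [← bhat_self hp, ← bhat_self hq]
  simp only [bhat, Finset.mul_sum, ← Finset.sum_add_distrib, ← Finset.sum_sub_distrib]
  exact Finset.sum_congr rfl fun i _ ↦ by ring

lemma IsProbVec.eq_of_one_le_bhat (hp : IsProbVec p) (hq : IsProbVec q) (h : 1 ≤ bhat p q) :
    p = q := by
  have hsum : ∑ i, (√(p i) - √(q i)) ^ 2 = 0 := by
    refine le_antisymm ?_ (Finset.sum_nonneg fun i _ ↦ sq_nonneg _)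
    rw [sum_sq_sqrt_sub_sqrt hp.1 hq.1, hp.2, hq.2]
    linarith
  ext i
  have hi := (Finset.sum_eq_zero_iff_of_nonneg fun i _ ↦ sq_nonneg _).1 hsum i (Finset.mem_univ i)
  exact (Real.sqrt_inj (hp.1 i) (hq.1 i)).1 (sub_eq_zero.1 (sq_eq_zero_iff.1 hi))

end Bhattacharyya

section States

variable {α : Type*} [Fintype α] [DecidableEq α]

lemma isDensity_vecMulVec_star {v : α → ℂ} (hv : v ⬝ᵥ star v = 1) :
    IsDensity (Matrix.vecMulVec v (star v)) :=
  ⟨Matrix.posSemidef_vecMulVec_self_star v, by rw [Matrix.trace_vecMulVec, hv]⟩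

lemma exists_isDensity [Nonempty α] : ∃ ρ : Matrix α α ℂ, IsDensity ρ :=
  let ⟨i⟩ := ‹Nonempty α›
  ⟨_, isDensity_vecMulVec_star (v := Pi.single i 1) (by simp)⟩

lemma eq_zero_of_forall_re_trace_mul_density {H : Matrix α α ℂ} (hH : H.IsHermitian)
    (h : ∀ ρ, IsDensity ρ → (H * ρ).trace.re = 0) : H = 0 := by
  refine hH.eigenvalues_eq_zero_iff.1 (funext fun i ↦ ?_)
  let v : α → ℂ := hH.eigenvectorBasis i
  have hv : v ⬝ᵥ star v = 1 := by
    simpa [v] using (EuclideanSpace.inner_eq_star_dotProduct _ _).symm.trans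
      (hH.eigenvectorBasis.inner_eq_one i)
  rw [hH.eigenvalues_eq, dotProduct_comm, ← Matrix.trace_vecMulVec, ← Matrix.mul_vecMulVec]
  exact h _ (isDensity_vecMulVec_star hv)

variable {n : ℕ} {E : Fin n → Matrix α α ℂ} {ρ σ : Matrix α α ℂ}

lemma re_trace_mul_mul_conjTranspose_eq_outDist (E : Fin n → Matrix α α ℂ) (A : Matrix α α ℂ)
    (i : Fin n) :
    (A * E i * Aᴴ).trace.re = outDist E (Aᴴ * A) i := by
  rw [Matrix.trace_mul_cycle, outDist, Matrix.trace_mul_comm]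

lemma IsPOVM.isProbVec_outDist (hE : IsPOVM E) (hρ : IsDensity ρ) : IsProbVec (outDist E ρ) := by
  constructor
  · intro i
    rw [← conjTranspose_matSqrt_mul_matSqrt hρ.1, ← re_trace_mul_mul_conjTranspose_eq_outDist]
    exact (Complex.nonneg_iff.1 ((hE.1 i).mul_mul_conjTranspose_same _).trace_nonneg).1
  · simp only [outDist, ← Complex.re_sum, ← Matrix.trace_sum, ← Finset.sum_mul, hE.2,
      Matrix.one_mul, hρ.2, Complex.one_re]

lemma eq_of_forall_outDist_eq {E₁ E₂ : Fin n → Matrix α α ℂ} (hE₁ : ∀ i, (E₁ i).IsHermitian)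
    (hE₂ : ∀ i, (E₂ i).IsHermitian) (h : ∀ ρ, IsDensity ρ → outDist E₁ ρ = outDist E₂ ρ) :
    E₁ = E₂ := by
  ext1 i
  refine sub_eq_zero.1 <| eq_zero_of_forall_re_trace_mul_density ((hE₁ i).sub (hE₂ i))
    fun ρ hρ ↦ ?_
  rw [sub_mul, Matrix.trace_sub, Complex.sub_re, sub_eq_zero]
  exact congr_fun (h ρ hρ) i

lemma fid_nonneg (ρ σ : Matrix α α ℂ) : 0 ≤ fid ρ σ :=
  (Complex.nonneg_iff.1 (posSemidef_matSqrt _).trace_nonneg).1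

lemma IsDensity.fid_self (hρ : IsDensity ρ) : fid ρ ρ = 1 := by
  have hconj : matSqrt ρ * ρ * matSqrt ρ = ρ * ρ := calc
    _ = matSqrt ρ * (matSqrt ρ * matSqrt ρ) * matSqrt ρ := by rw [matSqrt_mul_matSqrt hρ.1]
    _ = (matSqrt ρ * matSqrt ρ) * (matSqrt ρ * matSqrt ρ) := by noncomm_ring
    _ = ρ * ρ := by rw [matSqrt_mul_matSqrt hρ.1]
  rw [fid, hconj, matSqrt_mul_self hρ.1, hρ.2, Complex.one_re]

lemma exists_unitary_fid_eq (ρ : Matrix α α ℂ) (hσ : σ.PosSemidef) :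
    ∃ U ∈ Matrix.unitaryGroup α ℂ, fid ρ σ = (U * matSqrt σ * matSqrt ρ).trace.re := by
  have hgram : matSqrt ρ * σ * matSqrt ρ = (matSqrt σ * matSqrt ρ)ᴴ * (matSqrt σ * matSqrt ρ) := by
    nth_rw 1 [← matSqrt_mul_matSqrt hσ]
    simp only [Matrix.conjTranspose_mul, conjTranspose_matSqrt, mul_assoc]
  obtain ⟨U, hU, hUM⟩ := exists_unitary_mul_eq_of_conjTranspose_mul_self_eq
    (A := matSqrt σ * matSqrt ρ) (B := matSqrt (matSqrt ρ * σ * matSqrt ρ)) <| by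
      rw [hgram, conjTranspose_matSqrt_mul_matSqrt (Matrix.posSemidef_conjTranspose_mul_self _)]
  exact ⟨U, hU, by rw [fid, ← hUM, mul_assoc]⟩

lemma IsPOVM.fid_le_bhat (hE : IsPOVM E) (hρ : ρ.PosSemidef) (hσ : σ.PosSemidef) :
    fid ρ σ ≤ bhat (outDist E ρ) (outDist E σ) := by
  obtain ⟨U, hU, hfid⟩ := exists_unitary_fid_eq ρ hσ
  have hσU : (U * matSqrt σ)ᴴ * (U * matSqrt σ) = σ := by
    rw [Matrix.conjTranspose_mul, mul_assoc, ← mul_assoc Uᴴ, ← Matrix.star_eq_conjTranspose U,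
      Unitary.star_mul_self_of_mem hU, one_mul, conjTranspose_matSqrt_mul_matSqrt hσ]
  calc fid ρ σ = ∑ i, (U * matSqrt σ * E i * (matSqrt ρ)ᴴ).trace.re := by
        rw [← Complex.re_sum, ← Matrix.trace_sum, ← Finset.sum_mul, ← Finset.mul_sum, hE.2,
          mul_one, conjTranspose_matSqrt, hfid]
    _ ≤ ∑ i, √(outDist E σ i) * √(outDist E ρ i) := by
        refine Finset.sum_le_sum fun i _ ↦ ?_
        have hcs := re_trace_mul_mul_conjTranspose_le (hE.1 i) (U * matSqrt σ) (matSqrt ρ)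
        simpa only [RCLike.re_eq_complex_re, re_trace_mul_mul_conjTranspose_eq_outDist, hσU,
          conjTranspose_matSqrt_mul_matSqrt hρ] using hcs
    _ = bhat (outDist E ρ) (outDist E σ) := Finset.sum_congr rfl fun i _ ↦ mul_comm _ _

end States

section ObsB

variable {α : Type*} [Fintype α] [DecidableEq α] {n : ℕ} {E E₁ E₂ : Fin n → Matrix α α ℂ}

lemma obsB_le {ρ₁ ρ₂ : Matrix α α ℂ} (hρ₁ : IsDensity ρ₁) (hρ₂ : IsDensity ρ₂)
    (h : fid ρ₁ ρ₂ ≠ 0) :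
    obsB E₁ E₂ ≤ bhat (outDist E₁ ρ₁) (outDist E₂ ρ₂) / fid ρ₁ ρ₂ := by
  refine csInf_le ⟨0, ?_⟩ ⟨ρ₁, ρ₂, hρ₁, hρ₂, h, rfl⟩
  rintro _ ⟨σ₁, σ₂, -, -, -, rfl⟩
  exact div_nonneg (bhat_nonneg _ _) (fid_nonneg _ _)

lemma obsB_le_bhat {ρ : Matrix α α ℂ} (hρ : IsDensity ρ) :
    obsB E₁ E₂ ≤ bhat (outDist E₁ ρ) (outDist E₂ ρ) := by
  simpa [hρ.fid_self] using obsB_le (E₁ := E₁) (E₂ := E₂) hρ hρ (by simp [hρ.fid_self])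

lemma IsPOVM.obsB_self [Nonempty α] (hE : IsPOVM E) : obsB E E = 1 := by
  obtain ⟨ρ, hρ⟩ := exists_isDensity (α := α)
  have hp := hE.isProbVec_outDist hρ
  apply le_antisymm
  · simpa [bhat_self hp.1, hp.2] using obsB_le_bhat (E₁ := E) (E₂ := E) hρ
  · refine le_csInf ⟨_, ρ, ρ, hρ, hρ, by simp [hρ.fid_self], rfl⟩ ?_
    rintro _ ⟨σ₁, σ₂, hσ₁, hσ₂, h, rfl⟩
    rw [one_le_div₀ ((fid_nonneg _ _).lt_of_ne' h)]
    exact hE.fid_le_bhat hσ₁.1 hσ₂.1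

lemma IsPOVM.eq_of_one_le_obsB (hE₁ : IsPOVM E₁) (hE₂ : IsPOVM E₂) (h : 1 ≤ obsB E₁ E₂) :
    E₁ = E₂ :=
  eq_of_forall_outDist_eq (fun i ↦ (hE₁.1 i).isHermitian) (fun i ↦ (hE₂.1 i).isHermitian)
    fun _ hρ ↦ (hE₁.isProbVec_outDist hρ).eq_of_one_le_bhat (hE₂.isProbVec_outDist hρ)
      (h.trans (obsB_le_bhat hρ))

theorem obsB_eq_one_iff_general [Nonempty α] (hE₁ : IsPOVM E₁) (hE₂ : IsPOVM E₂) :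
    obsB E₁ E₂ = 1 ↔ E₁ = E₂ := by
  refine ⟨fun h ↦ hE₁.eq_of_one_le_obsB hE₂ h.ge, ?_⟩
  rintro rfl
  exact hE₁.obsB_self

end ObsB

/-- Property (B3): `B(E₁,E₂) = 1` iff `E₁ = E₂`. -/
theorem obsB_eq_one_iff {d n : ℕ} (hd : 1 ≤ d)
    (E₁ E₂ : Fin n → Matrix (Fin d) (Fin d) ℂ) (hE₁ : IsPOVM E₁) (hE₂ : IsPOVM E₂) :
    obsB E₁ E₂ = 1 ↔ ∀ i, E₁ i = E₂ i := by
  have : Nonempty (Fin d) := ⟨⟨0, hd⟩⟩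
  rw [obsB_eq_one_iff_general hE₁ hE₂, funext_iff]

end QProg
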